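/- Derivative of w along the curve h_ε: let x, s : ℝ → ℝ be differentiable functions of τ with x(τ) < 1, x(τ) + s(τ) > 0, and s'(τ)(s(τ) + x(τ)) = 2s(τ)x'(τ) for all τ (the ODE ds/dx = 2s/(s + x)). Set w(τ) = (3(1 − x(τ)) + 1 + s(τ))²/(1 − x(τ)) and α(τ) = 3x(τ)² − 2x(τ) + s(τ)² + 2s(τ). Then (x(τ) + s(τ))·w'(τ) = α(τ)·((3(1 − x(τ)) + 1 + s(τ))/(1 − x(τ))²)·x'(τ); in particular, wherever α ≠ 0, (1/α)w'(τ) = ((3(1 − x) + 1 + s)/((x + s)(1 − x)²))·x'(τ), which is negative whenever x'(τ) < 0. -/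

import Mathlib

/-!
Differentiating the quotient gives
`w' = (3(1 - x) + 1 + s) / (1 - x)² · ((3x - 2 + s) x' + 2(1 - x) s')`.
Multiplying by `x + s` and eliminating `s'` with the ODE leaves the factor
`(3x - 2 + s)(s + x) + 4s(1 - x)` in front of `x'`, and this is exactly `α`. For `x < 1` and
`x + s > 0` the remaining factor `3(1 - x) + 1 + s = 4(1 - x) + (x + s)` is positive, so `w' / α`
has the sign of `x'`.
-/

namespace HEps

/-- The polynomial `α(x, s)`, which governs the variation of `w` along `h_ε`. -/
def alpha {R : Type*} [CommRing R] (x s : R) : R :=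
  3 * x ^ 2 - 2 * x + s ^ 2 + 2 * s

/-- The function `w(x, s)`, meaningful for `x ≠ 1`; at `x = 1` it takes the junk value `0`. -/
def w {K : Type*} [Field K] (x s : K) : K :=
  (3 * (1 - x) + 1 + s) ^ 2 / (1 - x)

theorem mul_add_four_mul_eq_alpha {R : Type*} [CommRing R] (x s : R) :
    (3 * x - 2 + s) * (s + x) + 4 * s * (1 - x) = alpha x s := by
  rw [alpha]
  ring

theorem add_mul_eq_alpha_mul_of_ode {R : Type*} [CommRing R] {x s x' s' : R}
    (hode : s' * (s + x) = 2 * s * x') :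
    (x + s) * ((3 * x - 2 + s) * x' + 2 * (1 - x) * s') = alpha x s * x' :=
  calc (x + s) * ((3 * x - 2 + s) * x' + 2 * (1 - x) * s')
      = (3 * x - 2 + s) * (s + x) * x' + 2 * (1 - x) * (s' * (s + x)) := by ring
    _ = ((3 * x - 2 + s) * (s + x) + 4 * s * (1 - x)) * x' := by rw [hode]; ring
    _ = alpha x s * x' := by rw [mul_add_four_mul_eq_alpha]

theorem three_mul_one_sub_add_one_add_pos {R : Type*} [Ring R]
    [LinearOrder R] [IsStrictOrderedRing R] {x s : R} (hx1 : x < 1) (hxs : 0 < x + s) :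
    0 < 3 * (1 - x) + 1 + s :=
  calc 0 < 4 * (1 - x) + (x + s) :=
        add_pos (mul_pos four_pos (sub_pos.mpr hx1)) hxs
    _ = 3 * (1 - x) + 1 + s := by noncomm_ring

section Curve

variable {𝕜 : Type*} [NontriviallyNormedField 𝕜] {x s : 𝕜 → 𝕜} {x' s' τ : 𝕜}

theorem hasDerivAt_w (hx : HasDerivAt x x' τ) (hs : HasDerivAt s s' τ) (hx1 : x τ ≠ 1) :
    HasDerivAt (fun t => w (x t) (s t))
      ((3 * (1 - x τ) + 1 + s τ) / (1 - x τ) ^ 2 *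
        ((3 * x τ - 2 + s τ) * x' + 2 * (1 - x τ) * s')) τ := by
  have hden : HasDerivAt (fun t => 1 - x t) (-x') τ := hx.const_sub 1
  have hbase : HasDerivAt (fun t => 3 * (1 - x t) + 1 + s t) (3 * -x' + s') τ :=
    ((hden.const_mul 3).add_const 1).add hs
  refine ((hbase.fun_pow 2).fun_div hden (sub_ne_zero.mpr hx1.symm)).congr_deriv ?_
  push_cast
  ring

theorem add_mul_deriv_w_of_ode (hx : HasDerivAt x x' τ) (hs : HasDerivAt s s' τ)
    (hx1 : x τ ≠ 1) (hode : s' * (s τ + x τ) = 2 * s τ * x') :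
    (x τ + s τ) * deriv (fun t => w (x t) (s t)) τ =
      alpha (x τ) (s τ) * ((3 * (1 - x τ) + 1 + s τ) / (1 - x τ) ^ 2) * x' := by
  rw [(hasDerivAt_w hx hs hx1).deriv, mul_left_comm, add_mul_eq_alpha_mul_of_ode hode]
  ring

theorem one_div_alpha_mul_deriv_w_of_ode (hx : HasDerivAt x x' τ) (hs : HasDerivAt s s' τ)
    (hx1 : x τ ≠ 1) (hxs : x τ + s τ ≠ 0) (hode : s' * (s τ + x τ) = 2 * s τ * x')
    (hα : alpha (x τ) (s τ) ≠ 0) :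
    1 / alpha (x τ) (s τ) * deriv (fun t => w (x t) (s t)) τ =
      (3 * (1 - x τ) + 1 + s τ) / ((x τ + s τ) * (1 - x τ) ^ 2) * x' := by
  have hderiv := eq_div_of_mul_eq hxs
    ((mul_comm _ _).trans (add_mul_deriv_w_of_ode hx hs hx1 hode))
  rw [hderiv]
  field_simp

end Curve

end HEps

open HEps in
theorem w_deriv_along_h_eps_general {x s : ℝ → ℝ} {x' s' τ : ℝ}
    (hx : HasDerivAt x x' τ) (hs : HasDerivAt s s' τ)
    (hx1 : x τ < 1) (hxs : 0 < x τ + s τ) (hode : s' * (s τ + x τ) = 2 * s τ * x') :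
    (x τ + s τ) * deriv (fun t => w (x t) (s t)) τ =
        alpha (x τ) (s τ) * ((3 * (1 - x τ) + 1 + s τ) / (1 - x τ) ^ 2) * x' ∧
      (alpha (x τ) (s τ) ≠ 0 →
        1 / alpha (x τ) (s τ) * deriv (fun t => w (x t) (s t)) τ =
            (3 * (1 - x τ) + 1 + s τ) / ((x τ + s τ) * (1 - x τ) ^ 2) * x' ∧
          (x' < 0 → 1 / alpha (x τ) (s τ) * deriv (fun t => w (x t) (s t)) τ < 0)) := by
  refine ⟨add_mul_deriv_w_of_ode hx hs hx1.ne hode, fun hα => ?_⟩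
  have hquot := one_div_alpha_mul_deriv_w_of_ode hx hs hx1.ne hxs.ne' hode hα
  refine ⟨hquot, fun hx'_neg => ?_⟩
  rw [hquot]
  have hbase : 0 < 3 * (1 - x τ) + 1 + s τ := three_mul_one_sub_add_one_add_pos hx1 hxs
  have hden : 0 < (x τ + s τ) * (1 - x τ) ^ 2 := mul_pos hxs (pow_pos (sub_pos.mpr hx1) 2)
  exact mul_neg_of_pos_of_neg (div_pos hbase hden) hx'_neg

/-- **Derivative of `w` along the curve `h_ε`**: let `x, s : ℝ → ℝ` be
differentiable with `x < 1`, `x + s > 0`, satisfying the ODE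
`s'(s + x) = 2s·x'` (i.e. `ds/dx = 2s/(s + x)`). Setting
`w = (3(1 − x) + 1 + s)²/(1 − x)` and `α = 3x² − 2x + s² + 2s`, one has
`(x + s)·w' = α·((3(1 − x) + 1 + s)/(1 − x)²)·x'`; in particular, wherever
`α ≠ 0`, `(1/α)·w' = ((3(1 − x) + 1 + s)/((x + s)(1 − x)²))·x'`, which is
negative whenever `x' < 0`. -/
theorem w_deriv_along_h_eps (x s : ℝ → ℝ)
    (hx : Differentiable ℝ x) (hs : Differentiable ℝ s)
    (hx1 : ∀ τ, x τ < 1) (hxs : ∀ τ, 0 < x τ + s τ)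
    (hode : ∀ τ, deriv s τ * (s τ + x τ) = 2 * s τ * deriv x τ) :
    ∀ τ,
      (x τ + s τ) *
          deriv (fun t => (3 * (1 - x t) + 1 + s t) ^ 2 / (1 - x t)) τ
        = (3 * (x τ) ^ 2 - 2 * x τ + (s τ) ^ 2 + 2 * s τ) *
            ((3 * (1 - x τ) + 1 + s τ) / (1 - x τ) ^ 2) * deriv x τ ∧
      (3 * (x τ) ^ 2 - 2 * x τ + (s τ) ^ 2 + 2 * s τ ≠ 0 →
        (1 / (3 * (x τ) ^ 2 - 2 * x τ + (s τ) ^ 2 + 2 * s τ)) *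
            deriv (fun t => (3 * (1 - x t) + 1 + s t) ^ 2 / (1 - x t)) τ
          = (3 * (1 - x τ) + 1 + s τ) / ((x τ + s τ) * (1 - x τ) ^ 2) *
              deriv x τ ∧
        (deriv x τ < 0 →
          (1 / (3 * (x τ) ^ 2 - 2 * x τ + (s τ) ^ 2 + 2 * s τ)) *
              deriv (fun t => (3 * (1 - x t) + 1 + s t) ^ 2 / (1 - x t)) τ
            < 0)) :=
  fun τ =>
    w_deriv_along_h_eps_general (hx τ).hasDerivAt (hs τ).hasDerivAt (hx1 τ) (hxs τ) (hode τ)
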